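/- arXiv:1810.12464 — 2 statements merged into one kernel-verified Lean document; each statement's English description precedes it below -/
import Mathlib

section
/- Let V and U be finite types, let α : U → ℝ satisfy α u ≥ 0 for all u, and let h : V → U → ℝ satisfy h a u ≥ 0 for all a, u. Then the set function f_α defined by f_α A = ∑_{u ∈ U} α u · log (1 + ∑_{a ∈ A} h a u) is submodular: for all finite sets A ⊆ B ⊆ V and every v ∉ B, f_α (A ∪ {v}) − f_α A ≥ f_α (B ∪ {v}) − f_α B. -/
theorem add_le_map_add_map_swap_of_concaveOn {𝕜 E β : Type*} [Semiring 𝕜] [PartialOrder 𝕜]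
    [AddCommMonoid E] [SMul 𝕜 E] [AddCommMonoid β] [PartialOrder β] [IsOrderedAddMonoid β]
    [Module 𝕜 β] {s : Set E} {f : E → β} (hf : ConcaveOn 𝕜 s f) {x y : E} (hx : x ∈ s)
    (hy : y ∈ s) {a b : 𝕜} (ha : 0 ≤ a) (hb : 0 ≤ b) (hab : a + b = 1) :
    f x + f y ≤ f (a • x + b • y) + f (b • x + a • y) :=
  calc
    f x + f y = (a + b) • f x + (b + a) • f y := by rw [add_comm b a, hab, one_smul, one_smul]
    _ = (a • f x + b • f y) + (b • f x + a • f y) := by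
      rw [add_smul, add_smul, add_add_add_comm]
    _ ≤ f (a • x + b • y) + f (b • x + a • y) :=
      add_le_add (hf.2 hx hy ha hb hab) (hf.2 hx hy hb ha (add_comm a b ▸ hab))

theorem map_add_sub_le_map_add_sub_of_concaveOn {𝕜 β : Type*} [Field 𝕜] [LinearOrder 𝕜]
    [IsStrictOrderedRing 𝕜] [AddCommGroup β] [PartialOrder β] [IsOrderedAddMonoid β]
    [Module 𝕜 β] {s : Set 𝕜} {f : 𝕜 → β} (hf : ConcaveOn 𝕜 s f) {x y d : 𝕜} (hx : x ∈ s)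
    (hyd : y + d ∈ s) (hxy : x ≤ y) (hd : 0 ≤ d) :
    f (y + d) - f y ≤ f (x + d) - f x := by
  rcases hxy.eq_or_lt with rfl | hxy
  · exact le_rfl
  have hlen : 0 < y - x + d := add_pos_of_pos_of_nonneg (sub_pos.2 hxy) hd
  -- `y` and `x + d` divide the segment from `x` to `y + d` in opposite ratios.
  set a := d / (y - x + d) with ha
  set b := (y - x) / (y - x + d) with hb
  have hab : a + b = 1 := by rw [ha, hb]; field_simp; ring
  have hy : a • x + b • (y + d) = y := by
    simp only [ha, hb, smul_eq_mul]; field_simp; ring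
  have hxd : b • x + a • (y + d) = x + d := by
    simp only [ha, hb, smul_eq_mul]; field_simp; ring
  have hswap := add_le_map_add_map_swap_of_concaveOn hf hx hyd
    (div_nonneg hd hlen.le) (div_nonneg (sub_pos.2 hxy).le hlen.le) hab
  rw [hy, hxd] at hswap
  rwa [sub_le_sub_iff, add_comm, add_comm (f (x + d))]

/-- Submodularity of a set function, in its diminishing-returns form: the marginal gain of a new
element decreases as the set grows. The ground set is the whole type `V`. -/
def IsSubmodular {V β : Type*} [DecidableEq V] [Sub β] [LE β] (f : Finset V → β) : Prop :=
  ∀ ⦃A B : Finset V⦄, A ⊆ B → ∀ ⦃v⦄, v ∉ B → f (insert v B) - f B ≤ f (insert v A) - f A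

section Submodular

variable {V U 𝕜 β : Type*} [DecidableEq V] [AddCommGroup β] [PartialOrder β]
  [IsOrderedAddMonoid β]

theorem IsSubmodular.sum {s : Finset U} {f : U → Finset V → β}
    (hf : ∀ u ∈ s, IsSubmodular (f u)) : IsSubmodular fun A ↦ ∑ u ∈ s, f u A := by
  intro A B hAB v hv
  simp only [← Finset.sum_sub_distrib]
  exact Finset.sum_le_sum fun u hu ↦ hf u hu hAB hv

variable [Field 𝕜] [LinearOrder 𝕜] [IsStrictOrderedRing 𝕜] [Module 𝕜 β]

theorem isSubmodular_concaveOn_comp_sum {φ : 𝕜 → β} (hφ : ConcaveOn 𝕜 (Set.Ici 0) φ)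
    {w : V → 𝕜} (hw : ∀ a, 0 ≤ w a) : IsSubmodular fun A ↦ φ (∑ a ∈ A, w a) := by
  intro A B hAB v hvB
  have hvA : v ∉ A := fun hv ↦ hvB (hAB hv)
  have hsum_nonneg (C : Finset V) : 0 ≤ ∑ a ∈ C, w a := Finset.sum_nonneg fun a _ ↦ hw a
  have hsum_le : ∑ a ∈ A, w a ≤ ∑ a ∈ B, w a :=
    Finset.sum_le_sum_of_subset_of_nonneg hAB fun a _ _ ↦ hw a
  simp only [Finset.sum_insert hvA, Finset.sum_insert hvB, add_comm (w v)]
  exact map_add_sub_le_map_add_sub_of_concaveOn hφ (hsum_nonneg A)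
    (add_nonneg (hsum_nonneg B) (hw v)) hsum_le (hw v)

theorem scmm_submodular_general (s : Finset U) (φ : U → 𝕜 → β)
    (hφ : ∀ u ∈ s, ConcaveOn 𝕜 (Set.Ici 0) (φ u)) (h : V → U → 𝕜)
    (hh : ∀ a, ∀ u ∈ s, 0 ≤ h a u) :
    IsSubmodular fun A ↦ ∑ u ∈ s, φ u (∑ a ∈ A, h a u) :=
  .sum fun u hu ↦ isSubmodular_concaveOn_comp_sum (hφ u hu) fun a ↦ hh a u hu

end Submodular

theorem concaveOn_log_one_add : ConcaveOn ℝ (Set.Ioi (-1)) fun x ↦ Real.log (1 + x) := by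
  simpa [Function.comp_def] using strictConcaveOn_log_Ioi.concaveOn.translate_right 1

/-- The SCMM function `f_α A = ∑ u, α u * log (1 + ∑ a ∈ A, h a u)`
with nonnegative weights `α` and nonnegative features `h` is submodular. -/
theorem scmm_submodular
    {V U : Type*} [Fintype V] [DecidableEq V] [Fintype U]
    (α : U → ℝ) (hα : ∀ u, α u ≥ 0)
    (h : V → U → ℝ) (hh : ∀ a u, h a u ≥ 0)
    (fα : Finset V → ℝ)
    (hfα : ∀ A : Finset V,
      fα A = ∑ u : U, α u * Real.log (1 + ∑ a ∈ A, h a u)) :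
    ∀ A B : Finset V, A ⊆ B → ∀ v ∉ B,
      fα (A ∪ {v}) - fα A ≥ fα (B ∪ {v}) - fα B := by
  intro A B hAB v hv
  have hlog : ConcaveOn ℝ (Set.Ici 0) fun x ↦ Real.log (1 + x) :=
    concaveOn_log_one_add.subset (Set.Ici_subset_Ioi.2 neg_one_lt_zero) (convex_Ici 0)
  simpa only [hfα, Finset.union_singleton, smul_eq_mul] using
    scmm_submodular_general Finset.univ _ (fun u _ ↦ hlog.smul (hα u)) h
      (fun a u _ ↦ hh a u) hAB hv
end

section
/- Let V be a finite type, let k be a positive natural number with k ≤ |V|, and let f : Finset V → ℝ be a monotone nondecreasing submodular set function with f ∅ = 0. Let Â₀ = ∅ and for i = 0, …, k−1 let Â_{i+1} = Â_i ∪ {v_i}, where v_i is any element of V \ Â_i maximizing the marginal gain f (Â_i ∪ {v}) − f Â_i over v ∈ V \ Â_i (the forward greedy algorithm). Then the greedy output Â_k satisfies f Â_k ≥ (1 − (1 − 1/k)^k) · max { f A : A ⊆ V, |A| ≤ k }, and in particular f Â_k ≥ (1 − 1/e) · max { f A : A ⊆ V, |A| ≤ k }, where e is Euler's number. -/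
/-!
Adding the elements of a competitor `A` to the current set `S` one at a time gains, by diminishing
returns, at most the sum of their individual marginal gains at `S`. If `A` has at most `k`
elements, some element therefore closes at least a `1 / k` fraction of the gap `f A - f S`, and
so does the greedy choice. Hence `n` greedy steps shrink the gap by at least the factor
`(1 - 1 / k) ^ n ≤ exp (-n / k)`.
-/

open Finset

section SetFunction

variable {V M : Type*} [DecidableEq V]

/-- Submodularity of a set function, in its diminishing-returns form: the marginal gain of an
element can only decrease as the set it is added to grows. -/
def HasDiminishingReturns [Sub M] [LE M] (f : Finset V → M) : Prop :=
  ∀ ⦃A B : Finset V⦄, A ⊆ B → ∀ v ∉ B, f (insert v B) - f B ≤ f (insert v A) - f A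

/-- `S 0, …, S n` is a run of the forward greedy algorithm for `f`, started from an arbitrary set
`S 0`. Maximality of the marginal gain is expressed by comparing the values of `f` after the
insertion. Nothing is asked of `S` beyond index `n`. -/
def IsForwardGreedy [LE M] (f : Finset V → M) (S : ℕ → Finset V) (n : ℕ) : Prop :=
  ∀ i < n, ∃ v ∉ S i, S (i + 1) = insert v (S i) ∧ ∀ w ∉ S i, f (insert w (S i)) ≤ f (S (i + 1))

theorem IsForwardGreedy.mono [LE M] {f : Finset V → M} {S : ℕ → Finset V} {m n : ℕ}
    (hS : IsForwardGreedy f S n) (hmn : m ≤ n) : IsForwardGreedy f S m :=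
  fun i hi => hS i (hi.trans_le hmn)

section Preorder

variable [Preorder M] {f : Finset V → M} {S : ℕ → Finset V} {n i : ℕ}

theorem IsForwardGreedy.apply_insert_le (hS : IsForwardGreedy f S n) (hf : Monotone f)
    (hi : i < n) (w : V) : f (insert w (S i)) ≤ f (S (i + 1)) := by
  obtain ⟨v, -, hv, hmax⟩ := hS i hi
  by_cases hw : w ∈ S i
  · rw [insert_eq_of_mem hw, hv]
    exact hf (subset_insert v (S i))
  · exact hmax w hw

theorem IsForwardGreedy.apply_le_succ (hS : IsForwardGreedy f S n) (hf : Monotone f)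
    (hi : i < n) : f (S i) ≤ f (S (i + 1)) := by
  obtain ⟨v, -, hv, -⟩ := hS i hi
  exact hv ▸ hf (subset_insert v (S i))

end Preorder

section OrderedGroup

variable [AddCommGroup M] [Preorder M] [IsOrderedAddMonoid M] {f : Finset V → M}

theorem HasDiminishingReturns.union_sub_le_sum (hf : HasDiminishingReturns f)
    (S T : Finset V) : f (S ∪ T) - f S ≤ ∑ v ∈ T, (f (insert v S) - f S) := by
  induction T using Finset.induction_on with
  | empty => simp
  | insert a T ha ih =>
    rw [sum_insert ha, union_insert]
    by_cases haS : a ∈ S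
    · simpa [haS] using ih
    · have hgain : f (insert a (S ∪ T)) - f (S ∪ T) ≤ f (insert a S) - f S :=
        hf subset_union_left a (by simp [haS, ha])
      calc f (insert a (S ∪ T)) - f S
          = (f (insert a (S ∪ T)) - f (S ∪ T)) + (f (S ∪ T) - f S) := by abel
        _ ≤ (f (insert a S) - f S) + ∑ v ∈ T, (f (insert v S) - f S) := add_le_add hgain ih

theorem IsForwardGreedy.sub_le_nsmul {S : ℕ → Finset V} {n i k : ℕ}
    (hS : IsForwardGreedy f S n) (hmono : Monotone f) (hf : HasDiminishingReturns f) (hi : i < n)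
    {A : Finset V} (hA : #A ≤ k) : f A - f (S i) ≤ k • (f (S (i + 1)) - f (S i)) :=
  calc f A - f (S i)
      ≤ f (S i ∪ A) - f (S i) := sub_le_sub_right (hmono subset_union_right) _
    _ ≤ ∑ v ∈ A, (f (insert v (S i)) - f (S i)) := hf.union_sub_le_sum (S i) A
    _ ≤ #A • (f (S (i + 1)) - f (S i)) :=
        sum_le_card_nsmul _ _ _ fun v _ => sub_le_sub_right (hS.apply_insert_le hmono hi v) _
    _ ≤ k • (f (S (i + 1)) - f (S i)) :=
        nsmul_le_nsmul_left (sub_nonneg.2 (hS.apply_le_succ hmono hi)) hA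

end OrderedGroup

section OrderedField

variable {K : Type*} [Field K] [LinearOrder K] [IsStrictOrderedRing K]
  {f : Finset V → K} {S : ℕ → Finset V} {n k : ℕ} {A : Finset V}

theorem one_sub_one_div_natCast_nonneg (k : ℕ) : 0 ≤ 1 - 1 / (k : K) :=
  sub_nonneg.2 (by simpa using Nat.cast_inv_le_one k)

theorem IsForwardGreedy.sub_succ_le {i : ℕ} (hS : IsForwardGreedy f S n) (hmono : Monotone f)
    (hf : HasDiminishingReturns f) (hi : i < n) (hk : 0 < k) (hA : #A ≤ k) :
    f A - f (S (i + 1)) ≤ (1 - 1 / (k : K)) * (f A - f (S i)) := by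
  have hgain : (f A - f (S i)) / k ≤ f (S (i + 1)) - f (S i) := by
    rw [div_le_iff₀' (Nat.cast_pos.2 hk), ← nsmul_eq_mul]
    exact hS.sub_le_nsmul hmono hf hi hA
  calc f A - f (S (i + 1)) ≤ (f A - f (S i)) - (f A - f (S i)) / k := by linarith
    _ = (1 - 1 / (k : K)) * (f A - f (S i)) := by ring

theorem IsForwardGreedy.sub_le_pow_mul (hS : IsForwardGreedy f S n) (hmono : Monotone f)
    (hf : HasDiminishingReturns f) (hk : 0 < k) (hA : #A ≤ k) :
    f A - f (S n) ≤ (1 - 1 / (k : K)) ^ n * (f A - f (S 0)) := by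
  induction n with
  | zero => simp
  | succ n ih =>
    calc f A - f (S (n + 1))
        ≤ (1 - 1 / (k : K)) * (f A - f (S n)) := hS.sub_succ_le hmono hf n.lt_succ_self hk hA
      _ ≤ (1 - 1 / (k : K)) * ((1 - 1 / (k : K)) ^ n * (f A - f (S 0))) :=
          mul_le_mul_of_nonneg_left (ih (hS.mono n.le_succ)) (one_sub_one_div_natCast_nonneg k)
      _ = (1 - 1 / (k : K)) ^ (n + 1) * (f A - f (S 0)) := by rw [pow_succ', mul_assoc]

theorem IsForwardGreedy.one_sub_pow_mul_le (hS : IsForwardGreedy f S n) (hmono : Monotone f)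
    (hf : HasDiminishingReturns f) (h0 : 0 ≤ f (S 0)) (hk : 0 < k) (hA : #A ≤ k) :
    (1 - (1 - 1 / (k : K)) ^ n) * f A ≤ f (S n) := by
  have hgap := hS.sub_le_pow_mul hmono hf hk hA
  have hpos : 0 ≤ (1 - 1 / (k : K)) ^ n * f (S 0) :=
    mul_nonneg (pow_nonneg (one_sub_one_div_natCast_nonneg k) n) h0
  linarith

end OrderedField

theorem one_sub_one_div_pow_le_exp_neg_div (k n : ℕ) :
    (1 - 1 / (k : ℝ)) ^ n ≤ Real.exp (-(n / k)) :=
  calc (1 - 1 / (k : ℝ)) ^ n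
      ≤ Real.exp (-(1 / k)) ^ n :=
        pow_le_pow_left₀ (one_sub_one_div_natCast_nonneg k) (Real.one_sub_le_exp_neg _) n
    _ = Real.exp (-(n / k)) := by rw [← Real.exp_nat_mul]; ring_nf

theorem forward_greedy_guarantee_general {f : Finset V → ℝ} {S : ℕ → Finset V} {n k : ℕ}
    (hmono : Monotone f) (hf : HasDiminishingReturns f) (hempty : 0 ≤ f ∅)
    (hS : IsForwardGreedy f S n) (hk : 0 < k) {A : Finset V} (hA : #A ≤ k) :
    (1 - (1 - 1 / (k : ℝ)) ^ n) * f A ≤ f (S n) ∧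
      (1 - Real.exp (-(n / k))) * f A ≤ f (S n) := by
  have nonneg (B : Finset V) : 0 ≤ f B := hempty.trans (hmono (empty_subset B))
  have hpow := hS.one_sub_pow_mul_le hmono hf (nonneg (S 0)) hk hA
  refine ⟨hpow, le_trans ?_ hpow⟩
  exact mul_le_mul_of_nonneg_right
    (sub_le_sub_left (one_sub_one_div_pow_le_exp_neg_div k n) 1) (nonneg A)

end SetFunction

/-- Nemhauser–Wolsey–Fisher guarantee for the forward greedy algorithm:
for a monotone nondecreasing submodular `f` with `f ∅ = 0`, the greedy
solution after `k` steps is within a factor `1 - (1 - 1/k)^k ≥ 1 - 1/e`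
of the optimum over all subsets of cardinality at most `k`. -/
theorem forward_greedy_guarantee
    {V : Type*} [Fintype V] [DecidableEq V]
    (k : ℕ) (hk : 0 < k) (hkV : k ≤ Fintype.card V)
    (f : Finset V → ℝ)
    (hmono : ∀ A B : Finset V, A ⊆ B → f A ≤ f B)
    (hsub : ∀ A B : Finset V, A ⊆ B → ∀ v ∉ B,
      f (A ∪ {v}) - f A ≥ f (B ∪ {v}) - f B)
    (hempty : f ∅ = 0)
    (Ahat : ℕ → Finset V)
    (h0 : Ahat 0 = ∅)
    (hstep : ∀ i < k, ∃ v ∈ Finset.univ \ Ahat i,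
      Ahat (i + 1) = Ahat i ∪ {v} ∧
      ∀ w ∈ Finset.univ \ Ahat i,
        f (Ahat i ∪ {v}) - f (Ahat i) ≥ f (Ahat i ∪ {w}) - f (Ahat i)) :
    f (Ahat k) ≥ (1 - (1 - 1 / (k : ℝ)) ^ k) *
      ((Finset.univ.powerset.filter (fun A : Finset V => A.card ≤ k)).sup'
        ⟨∅, by simp⟩ f) ∧
    f (Ahat k) ≥ (1 - 1 / Real.exp 1) *
      ((Finset.univ.powerset.filter (fun A : Finset V => A.card ≤ k)).sup'
        ⟨∅, by simp⟩ f) := by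
  have hf : HasDiminishingReturns f := fun A B hAB v hv => by simpa using hsub A B hAB v hv
  have hS : IsForwardGreedy f Ahat k := fun i hi => by
    obtain ⟨v, hv, hsucc, hmax⟩ := hstep i hi
    exact ⟨v, by simpa using hv, by simpa using hsucc, by simpa [hsucc] using hmax⟩
  obtain ⟨A, hA, hsup⟩ := exists_mem_eq_sup'
    (s := univ.powerset.filter fun A : Finset V => #A ≤ k) ⟨∅, by simp⟩ f
  rw [hsup]
  simpa [Real.exp_neg, hk.ne'] using
    forward_greedy_guarantee_general hmono hf hempty.ge hS hk (mem_filter.1 hA).2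
end
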